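/- arXiv:1802.05897 — 5 statements merged into one kernel-verified Lean document; each statement's English description precedes it below -/
import Mathlib

section
/- For every natural number n, the generalized bi-periodic Fibonacci sequence satisfies the Binet formula w_n = (a^{ζ(n+1)} / (ab)^{⌊n/2⌋}) · (A·α^{n-1} − B·β^{n-1}). -/
/-- The generalized bi-periodic Fibonacci sequence with parameters `a, b`
and initial values `w0, w1`. -/
noncomputable def w (a b w0 w1 : ℝ) : ℕ → ℝ
  | 0 => w0
  | 1 => w1
  | n + 2 => (if Even (n + 2) then a else b) * w a b w0 w1 (n + 1) + w a b w0 w1 n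

/-!
For a root `x` of `x ^ 2 = a * b * x + a * b`, the ratio `x ^ 2 / (a * b)` equals `x + 1`, so the
sequence `n ↦ a ^ ζ(n + 1) / (a * b) ^ ⌊n / 2⌋ * x ^ (n - 1)` is `a * (x + 1) ^ k / x` at
`n = 2 * k` and `(x + 1) ^ k` at `n = 2 * k + 1`. In this form it visibly satisfies the bi-periodic
recurrence.
The recurrence is linear and its solutions are determined by their first two terms, so the Binet
formula reduces to the fact that `A` and `B` are the coefficients which match these two terms.
-/

/-- The module of all sequences obeying the bi-periodic Fibonacci recurrence with parameters `a, b`,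
with arbitrary initial values. As in `w`, the coefficient is `a` when the index `n + 2` of the new
term is even. -/
def biperiodicFibSpace {R : Type*} [CommSemiring R] (a b : R) : Submodule R (ℕ → R) where
  carrier := {u | ∀ n, u (n + 2) = (if Even (n + 2) then a else b) * u (n + 1) + u n}
  zero_mem' := by simp
  add_mem' hu hv n := by
    simp only [Pi.add_apply, hu n, hv n]
    ring
  smul_mem' c u hu n := by
    simp only [Pi.smul_apply, smul_eq_mul, hu n]
    ring

theorem w_mem_biperiodicFibSpace (a b w0 w1 : ℝ) : w a b w0 w1 ∈ biperiodicFibSpace a b :=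
  fun _ ↦ by rw [w]

section CommSemiring

variable {R : Type*} [CommSemiring R] {a b c x : R} {u v : ℕ → R}

theorem mem_biperiodicFibSpace_iff_even_odd :
    u ∈ biperiodicFibSpace a b ↔
      (∀ k, u (2 * k + 2) = a * u (2 * k + 1) + u (2 * k)) ∧
        ∀ k, u (2 * k + 3) = b * u (2 * k + 2) + u (2 * k + 1) := by
  have even_index (k : ℕ) : Even (2 * k + 2) := by grind
  have odd_index (k : ℕ) : ¬Even (2 * k + 1 + 2) := by grind
  refine ⟨fun hu ↦ ⟨fun k ↦ ?_, fun k ↦ ?_⟩, fun ⟨heven, hodd⟩ n ↦ ?_⟩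
  · rw [hu (2 * k), if_pos (even_index k)]
  · rw [hu (2 * k + 1), if_neg (odd_index k)]
  · obtain ⟨k, rfl | rfl⟩ := n.even_or_odd'
    · rw [if_pos (even_index k), heven]
    · rw [if_neg (odd_index k), hodd]

theorem eq_of_mem_biperiodicFibSpace (hu : u ∈ biperiodicFibSpace a b)
    (hv : v ∈ biperiodicFibSpace a b) (h0 : u 0 = v 0) (h1 : u 1 = v 1) : u = v := by
  funext n
  induction n using Nat.twoStepInduction with
  | zero => exact h0
  | one => exact h1
  | more n ih ih_succ => rw [hu n, hv n, ih, ih_succ]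

theorem ne_zero_of_sq_eq_mul_add (hc : c ≠ 0) (hx : x ^ 2 = c * x + c) : x ≠ 0 := by
  rintro rfl
  exact hc (by simpa using hx.symm)

end CommSemiring

theorem ne_zero_of_add_eq_of_mul_eq_neg {R : Type*} [CommRing R] [NoZeroDivisors R] {c α β : R}
    (hadd : α + β = c) (hmul : α * β = -c) (hne : α ≠ β) : c ≠ 0 := by
  rintro rfl
  have hsq : (α - β) ^ 2 = 0 := by linear_combination (α + β) * hadd - 4 * hmul
  exact hne (sub_eq_zero.1 (pow_eq_zero_iff two_ne_zero |>.1 hsq))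

section Field

variable {K : Type*} [Field K] {a b c x p s α β A B : K}

/-- The sequence `n ↦ a ^ ζ(n + 1) / (a * b) ^ ⌊n / 2⌋ * x ^ (n - 1)`, of which the Binet formula is
a linear combination for two values of `x`. The last exponent is an integer, equal to `-1` at
`n = 0`. -/
def binetTerm (a b x : K) (n : ℕ) : K :=
  a ^ ((n + 1) % 2) / (a * b) ^ (n / 2) * x ^ ((n : ℤ) - 1)

theorem binetTerm_zero : binetTerm a b x 0 = a / x := by
  simp [binetTerm, div_eq_mul_inv]

theorem binetTerm_one : binetTerm a b x 1 = 1 := by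
  simp [binetTerm]

theorem sq_div_eq_add_one_of_sq_eq_mul_add (hc : c ≠ 0) (hx : x ^ 2 = c * x + c) :
    x ^ 2 / c = x + 1 := by
  rw [hx, div_eq_iff hc]
  ring

theorem binetTerm_two_mul (hab : a * b ≠ 0) (hx : x ^ 2 = a * b * x + a * b) (k : ℕ) :
    binetTerm a b x (2 * k) = a * (x + 1) ^ k / x := by
  have hparity : (2 * k + 1) % 2 = 1 := by lia
  have hhalf : 2 * k / 2 = k := by lia
  rw [binetTerm, hparity, hhalf, zpow_sub_one₀ (ne_zero_of_sq_eq_mul_add hab hx), zpow_natCast,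
    pow_mul, ← sq_div_eq_add_one_of_sq_eq_mul_add hab hx, div_pow]
  ring

theorem binetTerm_two_mul_add_one (hab : a * b ≠ 0) (hx : x ^ 2 = a * b * x + a * b) (k : ℕ) :
    binetTerm a b x (2 * k + 1) = (x + 1) ^ k := by
  have hparity : (2 * k + 1 + 1) % 2 = 0 := by lia
  have hhalf : (2 * k + 1) / 2 = k := by lia
  have hexponent : ((2 * k + 1 : ℕ) : ℤ) - 1 = (2 * k : ℕ) := by lia
  rw [binetTerm, hparity, hhalf, hexponent, zpow_natCast, pow_mul,
    ← sq_div_eq_add_one_of_sq_eq_mul_add hab hx, div_pow]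
  ring

theorem binetTerm_mem_biperiodicFibSpace (hab : a * b ≠ 0) (hx : x ^ 2 = a * b * x + a * b) :
    binetTerm a b x ∈ biperiodicFibSpace a b := by
  have hx0 : x ≠ 0 := ne_zero_of_sq_eq_mul_add hab hx
  refine mem_biperiodicFibSpace_iff_even_odd.2 ⟨fun k ↦ ?_, fun k ↦ ?_⟩
  · rw [← mul_add_one, binetTerm_two_mul hab hx, binetTerm_two_mul hab hx,
      binetTerm_two_mul_add_one hab hx]
    field_simp
    ring
  · rw [show 2 * k + 3 = 2 * (k + 1) + 1 by ring, ← mul_add_one,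
      binetTerm_two_mul_add_one hab hx, binetTerm_two_mul hab hx, binetTerm_two_mul_add_one hab hx]
    field_simp
    linear_combination (x + 1) ^ k * hx

theorem vieta_of_quadratic_formula [NeZero (2 : K)] (hα : α = (p + s) / 2) (hβ : β = (p - s) / 2)
    (hs : s ≠ 0) : α + β = p ∧ 4 * (α * β) = p ^ 2 - s ^ 2 ∧ α ≠ β := by
  have h2 : (2 : K) ≠ 0 := two_ne_zero
  have h2α : 2 * α = p + s := by rw [hα, mul_div_cancel₀ _ h2]
  have h2β : 2 * β = p - s := by rw [hβ, mul_div_cancel₀ _ h2]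
  refine ⟨mul_left_cancel₀ h2 ?_, ?_, fun h ↦ hs (mul_left_cancel₀ h2 ?_)⟩
  · linear_combination h2α + h2β
  · linear_combination 2 * β * h2α + (p + s) * h2β
  · linear_combination h2β - h2α + 2 * h

theorem binet_coeff_initial_zero {u₀ u₁ : K} (hmul : α * β = -(a * b)) (hα : α ≠ 0) (hβ : β ≠ 0)
    (hne : α ≠ β) (hA : A = (α * u₁ + b * u₀) / (α - β)) (hB : B = (β * u₁ + b * u₀) / (α - β)) :
    A * (a / α) - B * (a / β) = u₀ := by
  have hsub : α - β ≠ 0 := sub_ne_zero.2 hne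
  rw [hA, hB]
  field_simp
  linear_combination -u₀ * (α - β) * hmul

theorem binet_coeff_initial_one {u₀ u₁ : K} (hne : α ≠ β)
    (hA : A = (α * u₁ + b * u₀) / (α - β)) (hB : B = (β * u₁ + b * u₀) / (α - β)) :
    A - B = u₁ := by
  rw [hA, hB, ← sub_div, div_eq_iff (sub_ne_zero.2 hne)]
  ring

theorem stmt2_general {u : ℕ → K} (hu : u ∈ biperiodicFibSpace a b)
    (hadd : α + β = a * b) (hmul : α * β = -(a * b)) (hne : α ≠ β)
    (hA : A = (α * u 1 + b * u 0) / (α - β)) (hB : B = (β * u 1 + b * u 0) / (α - β)) (n : ℕ) :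
    u n = a ^ ((n + 1) % 2) / (a * b) ^ (n / 2) *
      (A * α ^ ((n : ℤ) - 1) - B * β ^ ((n : ℤ) - 1)) := by
  have hab : a * b ≠ 0 := ne_zero_of_add_eq_of_mul_eq_neg hadd hmul hne
  have hα : α ^ 2 = a * b * α + a * b := by linear_combination α * hadd - hmul
  have hβ : β ^ 2 = a * b * β + a * b := by linear_combination β * hadd - hmul
  have hcomb : A • binetTerm a b α - B • binetTerm a b β ∈ biperiodicFibSpace a b :=
    sub_mem (Submodule.smul_mem _ A (binetTerm_mem_biperiodicFibSpace hab hα))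
      (Submodule.smul_mem _ B (binetTerm_mem_biperiodicFibSpace hab hβ))
  have hzero : A * (a / α) - B * (a / β) = u 0 :=
    binet_coeff_initial_zero hmul (ne_zero_of_sq_eq_mul_add hab hα)
      (ne_zero_of_sq_eq_mul_add hab hβ) hne hA hB
  have hone : A - B = u 1 := binet_coeff_initial_one hne hA hB
  have heq : u = A • binetTerm a b α - B • binetTerm a b β :=
    eq_of_mem_biperiodicFibSpace hu hcomb (by simp [binetTerm_zero, hzero])
      (by simp [binetTerm_one, hone])
  rw [congrFun heq n]
  simp only [Pi.sub_apply, Pi.smul_apply, smul_eq_mul, binetTerm]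
  ring

end Field

/-- Binet formula for the generalized bi-periodic Fibonacci sequence.
Here `(n + 1) % 2` is the parity function `ζ(n+1)`, and the powers
`α ^ (n - 1)`, `β ^ (n - 1)` are integer powers. -/
theorem stmt2 (a b w0 w1 : ℝ) (ha : a ≠ 0) (hb : b ≠ 0)
    (hD : a ^ 2 * b ^ 2 + 4 * (a * b) > 0)
    (α β A B : ℝ)
    (hα : α = (a * b + Real.sqrt (a ^ 2 * b ^ 2 + 4 * (a * b))) / 2)
    (hβ : β = (a * b - Real.sqrt (a ^ 2 * b ^ 2 + 4 * (a * b))) / 2)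
    (hA : A = (α * w1 + b * w0) / (α - β))
    (hB : B = (β * w1 + b * w0) / (α - β))
    (n : ℕ) :
    w a b w0 w1 n =
      a ^ ((n + 1) % 2) / (a * b) ^ (n / 2) *
        (A * α ^ ((n : ℤ) - 1) - B * β ^ ((n : ℤ) - 1)) := by
  obtain ⟨hadd, hmul, hne⟩ := vieta_of_quadratic_formula hα hβ (Real.sqrt_ne_zero'.2 hD)
  exact stmt2_general (w_mem_biperiodicFibSpace a b w0 w1) hadd
    (by linear_combination (hmul - Real.sq_sqrt hD.le) / 4) hne hA hB n
end

section
/- For every natural number n, the generalized bi-periodic Fibonacci quaternion satisfies the Binet formula W_n = (1/(ab)^{⌊n/2⌋})·(A·α*·α^{n-1} − B·β*·β^{n-1}) if n is even, and W_n = (1/(ab)^{⌊n/2⌋})·(A·α**·α^{n-1} − B·β**·β^{n-1}) if n is odd. -/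
/-- The standard basis `e_0 = 1, e_1 = i, e_2 = j, e_3 = k` of the real quaternions. -/
noncomputable def e : ℕ → Quaternion ℝ
  | 0 => 1
  | 1 => ⟨0, 1, 0, 0⟩
  | 2 => ⟨0, 0, 1, 0⟩
  | _ => ⟨0, 0, 0, 1⟩

/-- The generalized bi-periodic Fibonacci quaternion `W_n = ∑_{l=0}^{3} w_{n+l} e_l`. -/
noncomputable def W (a b w0 w1 : ℝ) (n : ℕ) : Quaternion ℝ :=
  ∑ l ∈ Finset.range 4, w a b w0 w1 (n + l) • e l

/-- `qstar a b x = ∑_{l=0}^{3} (a^{ζ(l+1)}/(ab)^{⌊l/2⌋}) x^l e_l`; applied to `α`, `β`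
it gives the quaternions `α*`, `β*`. -/
noncomputable def qstar (a b x : ℝ) : Quaternion ℝ :=
  ∑ l ∈ Finset.range 4, (a ^ ((l + 1) % 2) / (a * b) ^ (l / 2) * x ^ l) • e l

/-- `qstarstar a b x = ∑_{l=0}^{3} (a^{ζ(l)}/(ab)^{⌊(l+1)/2⌋}) x^l e_l`; applied to `α`, `β`
it gives the quaternions `α**`, `β**`. -/
noncomputable def qstarstar (a b x : ℝ) : Quaternion ℝ :=
  ∑ l ∈ Finset.range 4, (a ^ (l % 2) / (a * b) ^ ((l + 1) / 2) * x ^ l) • e l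

/-!
For a root `x` of `x ^ 2 = a * b * x + a * b`, the sequence `c n * x ^ (n - 1)`, with
`c n = a ^ ζ(n + 1) / (a * b) ^ ⌊n / 2⌋`, solves the bi-periodic recurrence. A solution is
determined by its first two terms, so every solution combines the sequences of the two roots, which
is the scalar Binet formula. Since `c (n + 2) = c n / (a * b)`, the coefficient `c (n + l)` equals
`c (ζ(n) + l) / (a * b) ^ ⌊n / 2⌋`, and the numbers `c l` and `c (1 + l)` are those in the
definitions of `α*`, `β*` and of `α**`, `β**`. Here `ζ` is the parity.
-/

section Recurrence

variable {R : Type*} [CommSemiring R] {a b : R}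

/-- The solution space of the bi-periodic recurrence, as a submodule so that closure under linear
combinations is available. The sequences start at index `0`, and `a` is the multiplier in the
equations for terms of even index. -/
def biPeriodicSolutions (a b : R) : Submodule R (ℕ → R) where
  carrier := {u | ∀ n, u (n + 2) = (if Even n then a else b) * u (n + 1) + u n}
  zero_mem' n := by simp
  add_mem' hu hv n := by
    simp only [Pi.add_apply, hu n, hv n]
    ring
  smul_mem' r u hu n := by
    simp only [Pi.smul_apply, smul_eq_mul, hu n]
    ring

theorem mem_biPeriodicSolutions {u : ℕ → R} :
    u ∈ biPeriodicSolutions a b ↔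
      ∀ n, u (n + 2) = (if Even n then a else b) * u (n + 1) + u n :=
  Iff.rfl

theorem eq_of_mem_biPeriodicSolutions {u v : ℕ → R} (hu : u ∈ biPeriodicSolutions a b)
    (hv : v ∈ biPeriodicSolutions a b) (h0 : u 0 = v 0) (h1 : u 1 = v 1) : u = v := by
  funext n
  induction n using Nat.twoStepInduction with
  | zero => exact h0
  | one => exact h1
  | more n ih ih' =>
    rw [mem_biPeriodicSolutions.mp hu, mem_biPeriodicSolutions.mp hv, ih, ih']

end Recurrence

section Quadratic

theorem ne_zero_of_sq_eq {R : Type*} [Semiring R] {p q x : R} (hq : q ≠ 0)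
    (hx : x ^ 2 = p * x + q) : x ≠ 0 := by
  rintro rfl
  exact hq (by simpa using hx.symm)

theorem mul_eq_neg_of_sq_eq {R : Type*} [CommRing R] [NoZeroDivisors R] {p q x y : R}
    (hx : x ^ 2 = p * x + q) (hy : y ^ 2 = p * y + q) (hxy : x ≠ y) : x * y = -q := by
  have hsum : x + y = p :=
    mul_left_cancel₀ (sub_ne_zero.mpr hxy) (by linear_combination hx - hy)
  linear_combination x * hsum - hx

end Quadratic

section Binet

variable {K : Type*} [Field K] {a b x α β : K}

/-- The coefficient `a ^ ζ(n + 1) / (a * b) ^ ⌊n / 2⌋` of the Binet formula for the `n`-th term of a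
bi-periodic sequence, with the parity `ζ(n + 1)` encoded as `(n + 1) % 2`. -/
def binetCoeff (a b : K) (n : ℕ) : K :=
  a ^ ((n + 1) % 2) / (a * b) ^ (n / 2)

theorem binetCoeff_two_mul_add (a b : K) (m l : ℕ) :
    binetCoeff a b (2 * m + l) = ((a * b) ^ m)⁻¹ * binetCoeff a b l := by
  have hmod : (2 * m + l + 1) % 2 = (l + 1) % 2 := by lia
  have hdiv : (2 * m + l) / 2 = m + l / 2 := by lia
  rw [binetCoeff, binetCoeff, hmod, hdiv, pow_add, div_eq_mul_inv, div_eq_mul_inv, mul_inv]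
  ring

theorem binetCoeff_add_two (a b : K) (n : ℕ) :
    binetCoeff a b (n + 2) = (a * b)⁻¹ * binetCoeff a b n := by
  simpa [add_comm] using binetCoeff_two_mul_add a b 1 n

theorem ite_mul_binetCoeff_succ (hab : a * b ≠ 0) (n : ℕ) :
    (if Even n then a else b) * binetCoeff a b (n + 1) = binetCoeff a b n := by
  obtain ⟨m, rfl | rfl⟩ := Nat.even_or_odd' n
  · rw [if_pos (even_two_mul m), binetCoeff_two_mul_add, ← add_zero (2 * m),
      binetCoeff_two_mul_add]
    simp [binetCoeff, mul_comm]
  · rw [if_neg (by simp), add_assoc, binetCoeff_two_mul_add, binetCoeff_two_mul_add]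
    obtain ⟨ha, hb⟩ := mul_ne_zero_iff.mp hab
    have hcoeff_two : binetCoeff a b 2 = b⁻¹ := by
      simp [binetCoeff, div_mul_cancel_left₀ ha]
    have hcoeff_one : binetCoeff a b 1 = 1 := by simp [binetCoeff]
    rw [one_add_one_eq_two, hcoeff_two, hcoeff_one, mul_left_comm, mul_inv_cancel₀ hb]

theorem zpow_natCast_add_sub_one (hx : x ≠ 0) (n l : ℕ) :
    x ^ (((n + l : ℕ) : ℤ) - 1) = x ^ ((n : ℤ) - 1) * x ^ l := by
  rw [← zpow_natCast x l, ← zpow_add₀ hx, Nat.cast_add, add_sub_right_comm]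

theorem binetCoeff_mul_zpow_mem_biPeriodicSolutions (hab : a * b ≠ 0)
    (hx : x ^ 2 = a * b * x + a * b) :
    (fun n : ℕ => binetCoeff a b n * x ^ ((n : ℤ) - 1)) ∈ biPeriodicSolutions a b := by
  refine mem_biPeriodicSolutions.mpr fun n => ?_
  have hx0 := ne_zero_of_sq_eq hab hx
  rw [zpow_natCast_add_sub_one hx0 n 1, zpow_natCast_add_sub_one hx0 n 2, ← mul_assoc (ite _ _ _),
    ite_mul_binetCoeff_succ hab, binetCoeff_add_two, hx]
  linear_combination
    binetCoeff a b n * x ^ ((n : ℤ) - 1) * (x + 1) * inv_mul_cancel₀ hab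

theorem binet_of_mem_biPeriodicSolutions {u : ℕ → K} (hu : u ∈ biPeriodicSolutions a b)
    (hab : a * b ≠ 0) (hα : α ^ 2 = a * b * α + a * b) (hβ : β ^ 2 = a * b * β + a * b)
    (hαβ : α ≠ β) (n : ℕ) :
    u n = binetCoeff a b n * ((α * u 1 + b * u 0) / (α - β) * α ^ ((n : ℤ) - 1) -
      (β * u 1 + b * u 0) / (α - β) * β ^ ((n : ℤ) - 1)) := by
  set A := (α * u 1 + b * u 0) / (α - β) with hA
  set B := (β * u 1 + b * u 0) / (α - β) with hB
  have hd : α - β ≠ 0 := sub_ne_zero.mpr hαβ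
  have hα0 := ne_zero_of_sq_eq hab hα
  have hβ0 := ne_zero_of_sq_eq hab hβ
  have h0 : u 0 = a * (A * α⁻¹ - B * β⁻¹) := by
    have hnum : A * β - B * α = -(b * u 0) := by
      rw [hA, hB]
      field_simp
      ring
    have hprod := mul_eq_neg_of_sq_eq hα hβ hαβ
    refine mul_left_cancel₀ (mul_ne_zero hα0 hβ0) ?_
    calc α * β * u 0 = a * (A * β - B * α) := by rw [hprod, hnum]; ring
      _ = α * β * (a * (A * α⁻¹ - B * β⁻¹)) := by field_simp
  have h1 : u 1 = A - B := by
    rw [hA, hB]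
    field_simp
    ring
  have hsol := sub_mem
    (Submodule.smul_mem _ A (binetCoeff_mul_zpow_mem_biPeriodicSolutions hab hα))
    (Submodule.smul_mem _ B (binetCoeff_mul_zpow_mem_biPeriodicSolutions hab hβ))
  have huv := eq_of_mem_biPeriodicSolutions hu hsol
    (by simpa [binetCoeff, mul_sub, mul_left_comm] using h0) (by simpa [binetCoeff] using h1)
  calc u n = A * (binetCoeff a b n * α ^ ((n : ℤ) - 1)) -
        B * (binetCoeff a b n * β ^ ((n : ℤ) - 1)) := congrFun huv n
    _ = _ := by ring

end Binet

section Quaternion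

variable {a b α β : ℝ}

theorem w_mem_biPeriodicSolutions (a b w0 w1 : ℝ) : w a b w0 w1 ∈ biPeriodicSolutions a b :=
  mem_biPeriodicSolutions.mpr fun n => by simp [w, Nat.even_add]

/-- The common form of `qstar` (`r = 0`) and `qstarstar` (`r = 1`): the parity of the index enters
only as the shift `r` of the Binet coefficients. -/
noncomputable def binetQuaternion (a b : ℝ) (r : ℕ) (x : ℝ) : Quaternion ℝ :=
  ∑ l ∈ Finset.range 4, (binetCoeff a b (r + l) * x ^ l) • e l

theorem binetQuaternion_zero (a b x : ℝ) : binetQuaternion a b 0 x = qstar a b x := by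
  simp only [binetQuaternion, qstar, binetCoeff, zero_add]

theorem binetQuaternion_one (a b x : ℝ) : binetQuaternion a b 1 x = qstarstar a b x := by
  simp only [binetQuaternion, qstarstar, binetCoeff, add_comm 1, add_assoc, one_add_one_eq_two,
    Nat.add_mod_right]

theorem W_eq_binetQuaternion (w0 w1 : ℝ) (hab : a * b ≠ 0) (hα : α ^ 2 = a * b * α + a * b)
    (hβ : β ^ 2 = a * b * β + a * b) (hαβ : α ≠ β) (n : ℕ) :
    W a b w0 w1 n = ((a * b) ^ (n / 2))⁻¹ •
      (((α * w1 + b * w0) / (α - β) * α ^ ((n : ℤ) - 1)) • binetQuaternion a b (n % 2) α -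
        ((β * w1 + b * w0) / (α - β) * β ^ ((n : ℤ) - 1)) • binetQuaternion a b (n % 2) β) := by
  have hcoeff (l : ℕ) : binetCoeff a b (n + l) =
      ((a * b) ^ (n / 2))⁻¹ * binetCoeff a b (n % 2 + l) := by
    rw [← binetCoeff_two_mul_add, ← add_assoc, Nat.div_add_mod]
  simp only [W, binetQuaternion, Finset.smul_sum, ← Finset.sum_sub_distrib, smul_smul, ← sub_smul]
  refine Finset.sum_congr rfl fun l _ => congrArg (· • e l) ?_
  rw [binet_of_mem_biPeriodicSolutions (w_mem_biPeriodicSolutions a b w0 w1) hab hα hβ hαβ,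
    hcoeff, zpow_natCast_add_sub_one (ne_zero_of_sq_eq hab hα),
    zpow_natCast_add_sub_one (ne_zero_of_sq_eq hab hβ)]
  simp only [w]
  ring

end Quaternion

/-- Binet formula for the generalized bi-periodic Fibonacci quaternions. -/
theorem stmt4 (a b w0 w1 α β A B : ℝ)
    (ha : a ≠ 0) (hb : b ≠ 0) (hD : a ^ 2 * b ^ 2 + 4 * (a * b) > 0)
    (hα : α = (a * b + Real.sqrt (a ^ 2 * b ^ 2 + 4 * (a * b))) / 2)
    (hβ : β = (a * b - Real.sqrt (a ^ 2 * b ^ 2 + 4 * (a * b))) / 2)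
    (hA : A = (α * w1 + b * w0) / (α - β))
    (hB : B = (β * w1 + b * w0) / (α - β))
    (n : ℕ) :
    W a b w0 w1 n =
      if Even n then
        ((a * b) ^ (n / 2))⁻¹ •
          ((A * α ^ ((n : ℤ) - 1)) • qstar a b α - (B * β ^ ((n : ℤ) - 1)) • qstar a b β)
      else
        ((a * b) ^ (n / 2))⁻¹ •
          ((A * α ^ ((n : ℤ) - 1)) • qstarstar a b α -
            (B * β ^ ((n : ℤ) - 1)) • qstarstar a b β) := by
  have hs := Real.sq_sqrt hD.le
  have hα_root : α ^ 2 = a * b * α + a * b := by rw [hα]; linear_combination hs / 4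
  have hβ_root : β ^ 2 = a * b * β + a * b := by rw [hβ]; linear_combination hs / 4
  have hαβ : α ≠ β := ne_of_gt (by linarith [Real.sqrt_pos.mpr hD])
  rw [W_eq_binetQuaternion w0 w1 (mul_ne_zero ha hb) hα_root hβ_root hαβ, ← hA, ← hB]
  split_ifs with hn
  · rw [Nat.even_iff.mp hn, binetQuaternion_zero, binetQuaternion_zero]
  · rw [Nat.not_even_iff.mp hn, binetQuaternion_one, binetQuaternion_one]
end

section
/- (Cassini's like identity) For every even integer n ≥ 2, W_{n-2}·W_{n+2} − W_n² = (A·B·(α² − β²)/(αβ)³)·(α*·β*·β² − β*·α*·α²). -/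
/-
The recurrence is linear in `(w_0, w_1)`. If `x ^ 2 = ab(x + 1)`, the solution starting at `(a, x)`
is multiplied by `x + 1` at every double step, and the quaternion of its first four terms is
`qstar a b x`. Both `α` and `β` are such `x`, and decomposing `(w_0, w_1)` along `(a, α)` and
`(a, β)` turns the even-indexed quaternions into a sum of two geometric progressions with the scalar
ratios `α + 1` and `β + 1`, whose product is `1`. For such a sum the Cassini expression retains only
the mixed products of the two quaternion coefficients.
-/

section Linearity

variable (a b c d x₀ x₁ y₀ y₁ : ℝ)

theorem w_mul_add_mul (n : ℕ) :
    w a b (c * x₀ + d * y₀) (c * x₁ + d * y₁) n = c * w a b x₀ x₁ n + d * w a b y₀ y₁ n := by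
  induction n using Nat.twoStepInduction with
  | zero => simp only [w]
  | one => simp only [w]
  | more n ih₀ ih₁ =>
    simp only [w, ih₀, ih₁]
    ring

theorem W_mul_add_mul (n : ℕ) :
    W a b (c * x₀ + d * y₀) (c * x₁ + d * y₁) n = c • W a b x₀ x₁ n + d • W a b y₀ y₁ n := by
  simp only [W, w_mul_add_mul, add_smul, mul_smul, Finset.sum_add_distrib, Finset.smul_sum]

end Linearity

section GeometricSolution

variable {a b x : ℝ}

theorem w_add_two_of_sq_eq (hx : x ^ 2 = a * b * (x + 1)) (n : ℕ) :
    w a b a x (n + 2) = (x + 1) * w a b a x n := by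
  induction n using Nat.twoStepInduction with
  | zero =>
    simp only [w, zero_add, even_two, if_true]
    ring
  | one =>
    have odd_three : ¬Even (1 + 2) := by decide
    simp only [w, zero_add, even_two, odd_three, if_true, if_false]
    linear_combination -hx
  | more n ih₀ ih₁ =>
    have parity : Even (n + 2 + 2) ↔ Even (n + 2) := by simp [Nat.even_add]
    calc
      w a b a x (n + 2 + 2)
          = (if Even (n + 2) then a else b) * w a b a x (n + 1 + 2) + w a b a x (n + 2) := by
        rw [w]
        simp only [parity]
      _ = (x + 1) * ((if Even (n + 2) then a else b) * w a b a x (n + 1) + w a b a x n) := by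
        rw [ih₀, ih₁]
        ring
      _ = (x + 1) * w a b a x (n + 2) := by rw [w]

theorem W_add_two_of_sq_eq (hx : x ^ 2 = a * b * (x + 1)) (n : ℕ) :
    W a b a x (n + 2) = (x + 1) • W a b a x n := by
  simp only [W, add_right_comm n 2, w_add_two_of_sq_eq hx, mul_smul, Finset.smul_sum]

theorem W_zero_eq_qstar (hab : a * b ≠ 0) (hx : x ^ 2 = a * b * (x + 1)) :
    W a b a x 0 = qstar a b x := by
  have ha : a ≠ 0 := left_ne_zero_of_mul hab
  have hb : b ≠ 0 := right_ne_zero_of_mul hab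
  have coeff_zero : w a b a x 0 = a := by rw [w]
  have coeff_one : w a b a x 1 = x := by rw [w]
  have coeff_two : w a b a x 2 = a / (a * b) * x ^ 2 := by
    rw [w_add_two_of_sq_eq hx 0, coeff_zero, hx]
    field
  have coeff_three : w a b a x 3 = 1 / (a * b) * x ^ 3 := by
    rw [w_add_two_of_sq_eq hx 1, coeff_one, pow_succ, hx]
    field
  simp [W, qstar, Finset.sum_range_succ, coeff_zero, coeff_one, coeff_two, coeff_three]

theorem W_two_mul_of_sq_eq (hab : a * b ≠ 0) (hx : x ^ 2 = a * b * (x + 1)) (k : ℕ) :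
    W a b a x (2 * k) = (x + 1) ^ k • qstar a b x := by
  induction k with
  | zero => rw [mul_zero, W_zero_eq_qstar hab hx, pow_zero, one_smul]
  | succ k ih => rw [mul_add_one, W_add_two_of_sq_eq hx, ih, smul_smul, pow_succ']

end GeometricSolution

theorem sq_eq_mul_add_one_of_vieta {R : Type*} [CommRing R] {α β c : R} (hsum : α + β = c)
    (hprod : α * β = -c) : α ^ 2 = c * (α + 1) ∧ β ^ 2 = c * (β + 1) :=
  ⟨by linear_combination α * hsum - hprod, by linear_combination β * hsum - hprod⟩

theorem binet_initial_values {K : Type*} [Field K] {a b α β : K} (hab : a * b ≠ 0)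
    (hprod : α * β = -(a * b)) (hdiff : α - β ≠ 0) (w₀ w₁ : K) :
    w₀ = (α * w₁ + b * w₀) / (α - β) / α * a + -((β * w₁ + b * w₀) / (α - β) / β) * a ∧
      w₁ = (α * w₁ + b * w₀) / (α - β) / α * α + -((β * w₁ + b * w₀) / (α - β) / β) * β := by
  have hαβ : α * β ≠ 0 := hprod ▸ neg_ne_zero.mpr hab
  have hα : α ≠ 0 := left_ne_zero_of_mul hαβ
  have hβ : β ≠ 0 := right_ne_zero_of_mul hαβ
  constructor
  · field_simp
    linear_combination w₀ * (α - β) * hprod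
  · field

theorem W_two_mul_binet {a b α β : ℝ} (hab : a * b ≠ 0) (hsum : α + β = a * b)
    (hprod : α * β = -(a * b)) (hdiff : α - β ≠ 0) (w₀ w₁ : ℝ) (k : ℕ) :
    W a b w₀ w₁ (2 * k) =
      (α + 1) ^ k • ((α * w₁ + b * w₀) / (α - β) / α) • qstar a b α +
        (β + 1) ^ k • (-((β * w₁ + b * w₀) / (α - β) / β)) • qstar a b β := by
  obtain ⟨hα_sq, hβ_sq⟩ := sq_eq_mul_add_one_of_vieta hsum hprod
  obtain ⟨h₀, h₁⟩ := binet_initial_values hab hprod hdiff w₀ w₁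
  rw [smul_comm ((α + 1) ^ k), smul_comm ((β + 1) ^ k), ← W_two_mul_of_sq_eq hab hα_sq,
    ← W_two_mul_of_sq_eq hab hβ_sq, ← W_mul_add_mul, ← h₀, ← h₁]

theorem smul_add_smul_cassini {R M : Type*} [CommRing R] [Ring M] [Algebra R M]
    (p q : R) (u v : M) (k : ℕ) :
    (p ^ k • u + q ^ k • v) * (p ^ (k + 2) • u + q ^ (k + 2) • v) -
        (p ^ (k + 1) • u + q ^ (k + 1) • v) ^ 2 =
      ((p * q) ^ k * (p - q)) • (p • (v * u) - q • (u * v)) := by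
  simp only [sq, add_mul, mul_add, smul_mul_assoc, mul_smul_comm, mul_pow]
  module

/-- Cassini's like identity for the generalized bi-periodic Fibonacci quaternions. -/
theorem stmt6 (a b w0 w1 α β A B : ℝ)
    (ha : a ≠ 0) (hb : b ≠ 0) (hD : a ^ 2 * b ^ 2 + 4 * (a * b) > 0)
    (hα : α = (a * b + Real.sqrt (a ^ 2 * b ^ 2 + 4 * (a * b))) / 2)
    (hβ : β = (a * b - Real.sqrt (a ^ 2 * b ^ 2 + 4 * (a * b))) / 2)
    (hA : A = (α * w1 + b * w0) / (α - β))
    (hB : B = (β * w1 + b * w0) / (α - β))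
    (n : ℕ) (hn : 2 ≤ n) (hne : Even n) :
    W a b w0 w1 (n - 2) * W a b w0 w1 (n + 2) - W a b w0 w1 n ^ 2 =
      (A * B * (α ^ 2 - β ^ 2) / (α * β) ^ 3) •
        (β ^ 2 • (qstar a b α * qstar a b β) - α ^ 2 • (qstar a b β * qstar a b α)) := by
  have hsum : α + β = a * b := by rw [hα, hβ]; ring
  have hprod : α * β = -(a * b) := by
    rw [hα, hβ]
    linear_combination (-1 / 4) * Real.sq_sqrt hD.le
  have hdiff : α - β ≠ 0 := by
    rw [hα, hβ, ← sub_div, add_sub_sub_cancel, add_self_div_two]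
    exact (Real.sqrt_pos.mpr hD).ne'
  have hab : a * b ≠ 0 := mul_ne_zero ha hb
  obtain ⟨hα_sq, hβ_sq⟩ := sq_eq_mul_add_one_of_vieta hsum hprod
  have hratio : (α + 1) * (β + 1) = 1 := by linear_combination hsum + hprod
  obtain ⟨k, rfl⟩ : ∃ k, n = 2 * (k + 1) := ⟨n / 2 - 1, by grind⟩
  rw [show 2 * (k + 1) - 2 = 2 * k by lia, show 2 * (k + 1) + 2 = 2 * (k + 2) by lia]
  simp only [W_two_mul_binet hab hsum hprod hdiff, ← hA, ← hB]
  rw [smul_add_smul_cassini, hratio, one_pow, one_mul]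
  have hα_ratio : α + 1 = -α ^ 2 / (α * β) := by rw [hprod, hα_sq]; field
  have hβ_ratio : β + 1 = -β ^ 2 / (α * β) := by rw [hprod, hβ_sq]; field
  rw [hα_ratio, hβ_ratio]
  simp only [smul_mul_smul_comm]
  match_scalars <;> ring
end

section
/- For every integer n ≥ 1, the generalized bi-periodic Fibonacci quaternions with even indices satisfy the recurrence W_{2(n+1)} = (ab+2)·W_{2n} − W_{2(n-1)}. -/
section

variable (a b w0 w1 : ℝ) {m : ℕ}

theorem w_add_two_of_even (hm : Even m) :
    w a b w0 w1 (m + 2) = a * w a b w0 w1 (m + 1) + w a b w0 w1 m := by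
  rw [w, if_pos (hm.add even_two)]

theorem w_add_two_of_odd (hm : Odd m) :
    w a b w0 w1 (m + 2) = b * w a b w0 w1 (m + 1) + w a b w0 w1 m := by
  rw [w, if_neg (Nat.not_even_iff_odd.2 (hm.add_even even_two))]

/- The steps ending at `m + 2` and `m + 4` have the same coefficient, so `w (m + 1)` and `w (m + 3)`
can be eliminated in the same way for both parities of `m`. -/
theorem w_add_four (m : ℕ) :
    w a b w0 w1 (m + 4) = (a * b + 2) * w a b w0 w1 (m + 2) - w a b w0 w1 m := by
  rcases m.even_or_odd with hm | hm
  · have h₂ := w_add_two_of_even a b w0 w1 hm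
    have h₃ := w_add_two_of_odd a b w0 w1 hm.add_one
    have h₄ := w_add_two_of_even a b w0 w1 (hm.add even_two)
    linear_combination h₄ + a * h₃ - h₂
  · have h₂ := w_add_two_of_odd a b w0 w1 hm
    have h₃ := w_add_two_of_even a b w0 w1 hm.add_one
    have h₄ := w_add_two_of_odd a b w0 w1 (hm.add_even even_two)
    linear_combination h₄ + b * h₃ - h₂

theorem stmt7_general (m : ℕ) :
    W a b w0 w1 (m + 4) = (a * b + 2) • W a b w0 w1 (m + 2) - W a b w0 w1 m := by
  simp only [W, Finset.smul_sum, ← Finset.sum_sub_distrib, smul_smul, ← sub_smul]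
  refine Finset.sum_congr rfl fun l _ => ?_
  rw [Nat.add_right_comm m 4 l, Nat.add_right_comm m 2 l, w_add_four]

end

/-- The even-indexed generalized bi-periodic Fibonacci quaternions satisfy
`W_{2(n+1)} = (ab+2) W_{2n} - W_{2(n-1)}`. -/
theorem stmt7 (a b w0 w1 : ℝ) (ha : a ≠ 0) (hb : b ≠ 0) (n : ℕ) (hn : 1 ≤ n) :
    W a b w0 w1 (2 * (n + 1)) =
      (a * b + 2) • W a b w0 w1 (2 * n) - W a b w0 w1 (2 * (n - 1)) := by
  obtain ⟨k, rfl⟩ := Nat.exists_eq_add_of_le' hn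
  exact stmt7_general a b w0 w1 (2 * k)
end

section
/- For every natural number n, W_{2(n+1)}·Q_{2n} − W_{2n}·Q_{2(n+1)} = (1/(ab))·(A·α*·β*·β − B·β*·α*·α). -/
/-- The bi-periodic Fibonacci quaternion `Q_n`, i.e. `W_n` with `w_0 = 0`, `w_1 = 1`. -/
noncomputable def Q (a b : ℝ) (n : ℕ) : Quaternion ℝ :=
  W a b 0 1 n

/-!
If `x ^ 2 = a * b * (x + 1)`, the solution of the bi-periodic recurrence starting with `a, x` is
multiplied by `x + 1` every two steps. Hence its quaternion `W` at `2 * m` is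
`(x + 1) ^ m • qstar a b x`, and `W`, `Q` at even indices are combinations of these two geometric
sequences for `x = α, β`. In `W_{2(n+r)} Q_{2n} - W_{2n} Q_{2(n+r)}` the terms in `α* α*` and
`β* β*` cancel, and since `(α + 1) * (β + 1) = 1` the common scalar of the two mixed terms does not
depend on `n`: it is a multiple of `q_{2r}`.
-/

section Recurrence

variable {a : ℝ}

lemma w_add_two (a b w0 w1 : ℝ) (n : ℕ) :
    w a b w0 w1 (n + 2) =
      (if Even n then a else b) * w a b w0 w1 (n + 1) + w a b w0 w1 n := by
  rw [w]
  simp only [Nat.even_add, even_two, iff_true]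

lemma w_mul_sub_mul (a b p q u₀ u₁ v₀ v₁ : ℝ) (n : ℕ) :
    w a b (p * u₀ - q * v₀) (p * u₁ - q * v₁) n = p * w a b u₀ u₁ n - q * w a b v₀ v₁ n := by
  induction n using Nat.twoStepInduction with
  | zero => simp only [w]
  | one => simp only [w]
  | more n ih₀ ih₁ =>
    simp only [w_add_two, ih₀, ih₁]
    ring

lemma w_eq_mul_sub_mul {x y : ℝ} (ha : a ≠ 0) (hxy : x ≠ y) (b w0 w1 : ℝ) (n : ℕ) :
    w a b w0 w1 n =
      (w1 - y * w0 / a) / (x - y) * w a b a x n - (w1 - x * w0 / a) / (x - y) * w a b a y n := by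
  have hd : x - y ≠ 0 := sub_ne_zero.mpr hxy
  rw [← w_mul_sub_mul]
  congr 1 <;> field_simp <;> ring

lemma W_eq_smul_sub_smul {x y : ℝ} (ha : a ≠ 0) (hxy : x ≠ y) (b w0 w1 : ℝ) (n : ℕ) :
    W a b w0 w1 n =
      ((w1 - y * w0 / a) / (x - y)) • W a b a x n -
        ((w1 - x * w0 / a) / (x - y)) • W a b a y n := by
  simp only [W, Finset.smul_sum, ← Finset.sum_sub_distrib, smul_smul, ← sub_smul,
    ← w_eq_mul_sub_mul ha hxy]

end Recurrence

section Root

variable {a b x : ℝ}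

lemma ite_mul_w_root_succ (hab : a * b ≠ 0) (hx : x ^ 2 = a * b * (x + 1)) (n : ℕ) :
    (if Even n then a else b) * w a b a x (n + 1) = x * w a b a x n := by
  induction n with
  | zero => simp [w, mul_comm]
  | succ n ih =>
    have hcoeff : (if Even (n + 1) then a else b) * (if Even n then a else b) = a * b := by
      by_cases hn : Even n <;> simp [hn, Nat.even_add_one, mul_comm]
    have hx0 : x ≠ 0 := by
      rintro rfl
      exact hab (by linear_combination -hx)
    apply mul_left_cancel₀ hx0
    rw [w_add_two]
    linear_combination (x * w a b a x (n + 1) + w a b a x (n + 1)) * hcoeff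
      - (if Even (n + 1) then a else b) * ih - w a b a x (n + 1) * hx

lemma w_root_add_two (hab : a * b ≠ 0) (hx : x ^ 2 = a * b * (x + 1)) (n : ℕ) :
    w a b a x (n + 2) = (x + 1) * w a b a x n := by
  rw [w_add_two, ite_mul_w_root_succ hab hx]
  ring

lemma w_root_two_mul_add (hab : a * b ≠ 0) (hx : x ^ 2 = a * b * (x + 1)) (m l : ℕ) :
    w a b a x (2 * m + l) = (x + 1) ^ m * w a b a x l := by
  induction m with
  | zero => simp
  | succ m ih =>
    rw [show 2 * (m + 1) + l = 2 * m + l + 2 by ring, w_root_add_two hab hx, ih]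
    ring

lemma w_root_eq (hab : a * b ≠ 0) (hx : x ^ 2 = a * b * (x + 1)) (n : ℕ) :
    w a b a x n = a ^ ((n + 1) % 2) / (a * b) ^ (n / 2) * x ^ n := by
  induction n using Nat.twoStepInduction with
  | zero => simp [w]
  | one => simp [w]
  | more n ih _ =>
    rw [w_root_add_two hab hx, ih, show (n + 2 + 1) % 2 = (n + 1) % 2 by lia,
      show (n + 2) / 2 = n / 2 + 1 by lia, pow_add x, hx]
    field_simp
    ring

lemma W_root_two_mul (hab : a * b ≠ 0) (hx : x ^ 2 = a * b * (x + 1)) (m : ℕ) :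
    W a b a x (2 * m) = (x + 1) ^ m • qstar a b x := by
  simp only [W, qstar, w_root_two_mul_add hab hx, w_root_eq hab hx, Finset.smul_sum, smul_smul]

end Root

section TwoRoots

variable {a b x y : ℝ}

lemma w_zero_one_two_mul (hab : a * b ≠ 0) (hx : x ^ 2 = a * b * (x + 1))
    (hy : y ^ 2 = a * b * (y + 1)) (hxy : x ≠ y) (m : ℕ) :
    w a b 0 1 (2 * m) = a * (((x + 1) ^ m - (y + 1) ^ m) / (x - y)) := by
  have hroot {z : ℝ} (hz : z ^ 2 = a * b * (z + 1)) : w a b a z (2 * m) = (z + 1) ^ m * a :=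
    w_root_two_mul_add hab hz m 0
  rw [w_eq_mul_sub_mul (left_ne_zero_of_mul hab) hxy, hroot hx, hroot hy]
  ring

lemma W_two_mul (hab : a * b ≠ 0) (hx : x ^ 2 = a * b * (x + 1))
    (hy : y ^ 2 = a * b * (y + 1)) (hxy : x ≠ y) (w0 w1 : ℝ) (m : ℕ) :
    W a b w0 w1 (2 * m) =
      ((w1 - y * w0 / a) / (x - y)) • (x + 1) ^ m • qstar a b x -
        ((w1 - x * w0 / a) / (x - y)) • (y + 1) ^ m • qstar a b y := by
  rw [W_eq_smul_sub_smul (left_ne_zero_of_mul hab) hxy, W_root_two_mul hab hx,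
    W_root_two_mul hab hy]

lemma sub_mul_div_eq_neg_mul_div (hab : a * b ≠ 0) (hprod : x * y = -(a * b)) (w0 w1 : ℝ) :
    w1 - y * w0 / a = -((x * w1 + b * w0) * y) / (a * b) := by
  have ha : a ≠ 0 := left_ne_zero_of_mul hab
  have hb : b ≠ 0 := right_ne_zero_of_mul hab
  field_simp
  linear_combination w1 * hprod

end TwoRoots

lemma pow_add_mul_pow_sub_swap {R : Type*} [CommRing R] {s t : R} (hst : s * t = 1) (n r : ℕ) :
    s ^ (n + r) * t ^ n - s ^ n * t ^ (n + r) = s ^ r - t ^ r := by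
  have hpow : s ^ n * t ^ n = 1 := by rw [← mul_pow, hst, one_pow]
  linear_combination (s ^ r - t ^ r) * hpow

lemma smul_sub_smul_mul_sub_swap {R M : Type*} [CommRing R] [NonUnitalNonAssocRing M] [Module R M]
    [IsScalarTower R M M] [SMulCommClass R M M] (p q p' q' s t s' t' : R) (X Y : M) :
    (p • s • X - q • t • Y) * (p' • s' • X - q' • t' • Y) -
        (p • s' • X - q • t' • Y) * (p' • s • X - q' • t • Y) =
      (s * t' - s' * t) • ((q * p') • (Y * X) - (p * q') • (X * Y)) := by
  simp only [sub_mul, mul_sub, smul_smul, smul_mul_smul_comm]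
  module

lemma vieta_of_eq_half_add_sqrt {t D α β : ℝ} (hD : 0 < D) (hα : α = (t + √D) / 2)
    (hβ : β = (t - √D) / 2) : α + β = t ∧ α * β = (t ^ 2 - D) / 4 ∧ α ≠ β := by
  refine ⟨by rw [hα, hβ]; ring, ?_, ?_⟩
  · rw [hα, hβ]
    linear_combination -(1 / 4) * Real.sq_sqrt hD.le
  · have hsqrt : 0 < √D := Real.sqrt_pos.mpr hD
    intro h
    linarith

theorem stmt11_general {a b w0 w1 α β A B : ℝ} (ha : a ≠ 0) (hb : b ≠ 0)
    (hsum : α + β = a * b) (hprod : α * β = -(a * b)) (hne : α ≠ β)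
    (hA : A = (α * w1 + b * w0) / (α - β)) (hB : B = (β * w1 + b * w0) / (α - β)) (n r : ℕ) :
    W a b w0 w1 (2 * (n + r)) * Q a b (2 * n) - W a b w0 w1 (2 * n) * Q a b (2 * (n + r)) =
      (w a b 0 1 (2 * r) / a) • (a * b)⁻¹ •
        ((A * β) • (qstar a b α * qstar a b β) - (B * α) • (qstar a b β * qstar a b α)) := by
  have hab : a * b ≠ 0 := mul_ne_zero ha hb
  have hα : α ^ 2 = a * b * (α + 1) := by linear_combination α * hsum - hprod
  have hβ : β ^ 2 = a * b * (β + 1) := by linear_combination β * hsum - hprod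
  have hinv : (α + 1) * (β + 1) = 1 := by linear_combination hprod + hsum
  have hcoeffA : (w1 - β * w0 / a) / (α - β) = -(A * β) / (a * b) := by
    rw [sub_mul_div_eq_neg_mul_div hab hprod, hA]
    ring
  have hcoeffB : (w1 - α * w0 / a) / (α - β) = -(B * α) / (a * b) := by
    rw [sub_mul_div_eq_neg_mul_div hab (mul_comm β α ▸ hprod), hB]
    ring
  have hQcoeff (z : ℝ) : (1 - z * 0 / a) / (α - β) = (α - β)⁻¹ := by simp
  rw [w_zero_one_two_mul hab hα hβ hne, mul_div_cancel_left₀ _ ha]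
  simp only [Q, W_two_mul hab hα hβ hne, hcoeffA, hcoeffB, hQcoeff,
    smul_sub_smul_mul_sub_swap, pow_add_mul_pow_sub_swap hinv]
  module

/-- Relation between the generalized bi-periodic Fibonacci quaternions and the
bi-periodic Fibonacci quaternions. -/
theorem stmt11 (a b w0 w1 α β A B : ℝ)
    (ha : a ≠ 0) (hb : b ≠ 0) (hD : a ^ 2 * b ^ 2 + 4 * (a * b) > 0)
    (hα : α = (a * b + Real.sqrt (a ^ 2 * b ^ 2 + 4 * (a * b))) / 2)
    (hβ : β = (a * b - Real.sqrt (a ^ 2 * b ^ 2 + 4 * (a * b))) / 2)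
    (hA : A = (α * w1 + b * w0) / (α - β))
    (hB : B = (β * w1 + b * w0) / (α - β))
    (n : ℕ) :
    W a b w0 w1 (2 * (n + 1)) * Q a b (2 * n) -
        W a b w0 w1 (2 * n) * Q a b (2 * (n + 1)) =
      (a * b)⁻¹ •
        ((A * β) • (qstar a b α * qstar a b β) - (B * α) • (qstar a b β * qstar a b α)) := by
  obtain ⟨hsum, hprod, hne⟩ := vieta_of_eq_half_add_sqrt hD hα hβ
  simpa [w, ha] using stmt11_general ha hb hsum (by rw [hprod]; ring) hne hA hB n 1
end
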